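/- (Lower half of the error bound) Assume that for all x ∈ 𝒜 and i ∈ {1,…,n}, d_{xi} > 0 implies φ_{ix} > 0. Let ε = max_{x∈𝒜} max_{ i,j : φ_{ix}>0, φ_{jx}>0 } |J*(i) − J*(j)|, and let J̃(i) = Σ_{x∈𝒜} φ_{ix} r*_x. Then J̃(i) ≥ J*(i) − ε/(1−α) for every state i = 1,…,n. -/

import Mathlib

/-!
Let `T` be the Bellman operator and `J̃ i = ∑ x, φ i x * r x`. If `J - m ≤ J̃`, then monotonicity
and discounting give `J - α m ≤ T J - α m = T (J - m) ≤ T J̃`. Averaging `T J̃` with `d x`, and the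
resulting bound on `r x` with `φ i`, only involves states `j` with `J i - J j ≤ ε`, so
`J - (ε + α m) ≤ J̃`. Taking for `m` the largest value of `J - J̃` yields `m ≤ ε + α m`.
-/

lemma le_sum_mul_of_mem_stdSimplex {ι : Type*} [Fintype ι] {w f : ι → ℝ} {c : ℝ}
    (hw : w ∈ stdSimplex ℝ ι) (hf : ∀ i, 0 < w i → c ≤ f i) : c ≤ ∑ i, w i * f i := by
  have weighted_le (i : ι) : w i * c ≤ w i * f i := by
    rcases (hw.1 i).eq_or_lt with hzero | hpos
    · simp [← hzero]
    · exact mul_le_mul_of_nonneg_left (hf i hpos) hpos.le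
  calc c = ∑ i, w i * c := by rw [← Finset.sum_mul, hw.2, one_mul]
    _ ≤ ∑ i, w i * f i := Finset.sum_le_sum fun i _ ↦ weighted_le i

lemma le_div_one_sub_of_forall_bound {ι : Type*} [Finite ι] {e : ι → ℝ} {α ε : ℝ}
    (hα : α < 1) (he : ∀ m, (∀ i, e i ≤ m) → ∀ i, e i ≤ ε + α * m) (i : ι) :
    e i ≤ ε / (1 - α) := by
  have : Nonempty ι := ⟨i⟩
  obtain ⟨k, hk⟩ := Finite.exists_max e
  refine (hk i).trans ?_
  rw [le_div_iff₀ (sub_pos.2 hα)]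
  linarith [he (e k) hk k]

section DiscountedOperators

variable {S : Type*} {T : (S → ℝ) → S → ℝ} {J K : S → ℝ} {α ε : ℝ}

lemma sub_mul_le_apply_of_le_apply (hmono : Monotone T)
    (hdisc : ∀ J c i, T (fun j ↦ J j - c) i = T J i - α * c) (hJ : J ≤ T J) {m : ℝ}
    (hJK : ∀ i, J i - m ≤ K i) (i : S) : J i - α * m ≤ T K i :=
  calc J i - α * m ≤ T J i - α * m := sub_le_sub_right (hJ i) _
    _ = T (fun j ↦ J j - m) i := (hdisc J m i).symm
    _ ≤ T K i := hmono hJK i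

theorem aggregation_error_bound_lower_general {A : Type*} [Fintype S] [Fintype A]
    (hmono : Monotone T) (hdisc : ∀ J c i, T (fun j ↦ J j - c) i = T J i - α * c) (hα : α < 1)
    {d : A → S → ℝ} (hd : ∀ x, d x ∈ stdSimplex ℝ S)
    {φ : S → A → ℝ} (hφ : ∀ i, φ i ∈ stdSimplex ℝ A) (hJ : J ≤ T J)
    {r : A → ℝ} (hr : ∀ x, ∑ i, d x i * T (fun j ↦ ∑ y, φ j y * r y) i ≤ r x)
    (hε : ∀ x i j, 0 < φ i x → 0 < d x j → J i - J j ≤ ε) (i : S) :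
    J i - ε / (1 - α) ≤ ∑ x, φ i x * r x := by
  refine sub_le_comm.1 (le_div_one_sub_of_forall_bound
    (e := fun i ↦ J i - ∑ x, φ i x * r x) hα (fun m hm i ↦ ?_) i)
  have le_apply : ∀ j, J j - α * m ≤ T (fun j ↦ ∑ y, φ j y * r y) j :=
    sub_mul_le_apply_of_le_apply hmono hdisc hJ fun j ↦ sub_le_comm.1 (hm j)
  have le_aggregate (x : A) (hx : 0 < φ i x) : J i - (ε + α * m) ≤ r x :=
    (le_sum_mul_of_mem_stdSimplex (hd x) fun j hj ↦ by
      linarith [le_apply j, hε x i j hx hj]).trans (hr x)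
  exact sub_le_comm.1 (le_sum_mul_of_mem_stdSimplex (hφ i) le_aggregate)

end DiscountedOperators

section Bellman

variable {S C : Type*} [Fintype S] {U : S → Finset C} (hU : ∀ i, (U i).Nonempty)

/-- The Bellman operator of the discounted problem with control sets `U i`, transition
probabilities `p i u j`, stage costs `g i u j` and discount factor `α`. -/
noncomputable def bellmanOperator (p g : S → C → S → ℝ) (α : ℝ) (J : S → ℝ) (i : S) : ℝ :=
  (U i).inf' (hU i) fun u ↦ ∑ j, p i u j * (g i u j + α * J j)

variable {p : S → C → S → ℝ} (g : S → C → S → ℝ) {α : ℝ}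

lemma bellmanOperator_monotone (hα : 0 ≤ α) (hp : ∀ i, ∀ u ∈ U i, ∀ j, 0 ≤ p i u j) :
    Monotone (bellmanOperator hU p g α) := fun J K hJK i ↦
  Finset.inf'_mono_fun fun u hu ↦ Finset.sum_le_sum fun j _ ↦ by
    have := hp i u hu j
    gcongr
    exact hJK j

lemma bellmanOperator_sub_const (hp : ∀ i, ∀ u ∈ U i, ∑ j, p i u j = 1)
    (J : S → ℝ) (c : ℝ) (i : S) :
    bellmanOperator hU p g α (fun j ↦ J j - c) i = bellmanOperator hU p g α J i - α * c := by
  have cost_sub_const (u : C) (hu : u ∈ U i) :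
      ∑ j, p i u j * (g i u j + α * (J j - c)) =
        ∑ j, p i u j * (g i u j + α * J j) - α * c := by
    calc _ = ∑ j, (p i u j * (g i u j + α * J j) - p i u j * (α * c)) :=
          Finset.sum_congr rfl fun j _ ↦ by ring
      _ = _ := by rw [Finset.sum_sub_distrib, ← Finset.sum_mul, hp i u hu, one_mul]
  calc _ = (U i).inf' (hU i) fun u ↦ ∑ j, p i u j * (g i u j + α * J j) - α * c :=
        Finset.inf'_congr (hU i) rfl cost_sub_const
    _ = _ := (map_finset_inf' (OrderIso.subRight (α * c)) (hU i) _).symm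

end Bellman

section Oscillation

variable {S A : Type*} [Fintype S] [Nonempty S] [Fintype A] [Nonempty A]

/-- The largest variation `|J i - J j|` over pairs of states that belong to a common footprint
`{i | 0 < φ i x}`. Pairs outside the footprint of `x` contribute `0`, which leaves the maximum
unchanged as soon as some footprint is nonempty. -/
noncomputable def footprintOscillation (φ : S → A → ℝ) (J : S → ℝ) : ℝ :=
  Finset.univ.sup' Finset.univ_nonempty fun q : A × S × S ↦
    if 0 < φ q.2.1 q.1 ∧ 0 < φ q.2.2 q.1 then |J q.2.1 - J q.2.2| else 0

lemma abs_sub_le_footprintOscillation {φ : S → A → ℝ} (J : S → ℝ) {x : A} {i j : S}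
    (hi : 0 < φ i x) (hj : 0 < φ j x) : |J i - J j| ≤ footprintOscillation φ J :=
  calc |J i - J j| = if 0 < φ i x ∧ 0 < φ j x then |J i - J j| else 0 :=
        (if_pos ⟨hi, hj⟩).symm
    _ ≤ footprintOscillation φ J := Finset.le_sup'
        (fun q : A × S × S ↦
          if 0 < φ q.2.1 q.1 ∧ 0 < φ q.2.2 q.1 then |J q.2.1 - J q.2.2| else 0)
        (Finset.mem_univ (x, i, j))

end Oscillation

/-- Error bound on aggregation: under the support condition
`d_{xi} > 0 ⟹ φ_{ix} > 0`, the aggregation approximation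
`J̃(i) = Σ_x φ_{ix} r*_x` satisfies `J̃(i) ≥ J*(i) − ε/(1−α)`, where
`ε = max_{x} max_{i,j : φ_{ix}>0, φ_{jx}>0} |J*(i) − J*(j)|`. -/
theorem aggregation_error_bound_lower
    (n : ℕ) [NeZero n] (C A : Type) [Fintype A] [Nonempty A]
    (U : Fin n → Finset C) (hU : ∀ i, (U i).Nonempty)
    (α : ℝ) (hα0 : 0 < α) (hα1 : α < 1)
    (p g : Fin n → C → Fin n → ℝ)
    (hp : ∀ i, ∀ u ∈ U i, ∀ j, 0 ≤ p i u j)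
    (hp1 : ∀ i, ∀ u ∈ U i, ∑ j, p i u j = 1)
    (d : A → Fin n → ℝ) (hd : ∀ x i, 0 ≤ d x i) (hd1 : ∀ x, ∑ i, d x i = 1)
    (φ : Fin n → A → ℝ) (hφ : ∀ j y, 0 ≤ φ j y) (hφ1 : ∀ j, ∑ y, φ j y = 1)
    -- `J*` is the optimal cost vector of the original problem
    (Jstar : Fin n → ℝ)
    (hJstar : ∀ i, Jstar i = (U i).inf' (hU i)
      (fun u => ∑ j, p i u j * (g i u j + α * Jstar j)))
    -- `r*` is the (unique) fixed point of the aggregation operator `H`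
    (rstar : A → ℝ)
    (hfix : ∀ x, rstar x = ∑ i, d x i * (U i).inf' (hU i)
      (fun u => ∑ j, p i u j * (g i u j + α * ∑ y, φ j y * rstar y)))
    -- the support condition
    (hcond : ∀ x i, 0 < d x i → 0 < φ i x)
    -- `ε = max_{x∈𝒜} max_{i,j : φ_{ix}>0, φ_{jx}>0} |J*(i) − J*(j)|`
    (ε : ℝ)
    (hε : ε = Finset.univ.sup' Finset.univ_nonempty
      (fun q : A × Fin n × Fin n =>
        if 0 < φ q.2.1 q.1 ∧ 0 < φ q.2.2 q.1 then |Jstar q.2.1 - Jstar q.2.2| else 0))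
    -- the aggregation approximation `J̃`
    (Jtilde : Fin n → ℝ)
    (hJtilde : ∀ i, Jtilde i = ∑ x, φ i x * rstar x) :
    ∀ i, Jstar i - ε / (1 - α) ≤ Jtilde i := by
  intro i
  have sub_le_eps (x : A) (i j : Fin n) (hi : 0 < φ i x) (hj : 0 < d x j) :
      Jstar i - Jstar j ≤ ε :=
    hε ▸ (le_abs_self _).trans (abs_sub_le_footprintOscillation Jstar hi (hcond x j hj))
  rw [hJtilde i]
  exact aggregation_error_bound_lower_general (bellmanOperator_monotone hU g hα0.le hp)
    (bellmanOperator_sub_const hU g hp1) hα1 (fun x ↦ ⟨hd x, hd1 x⟩) (fun j ↦ ⟨hφ j, hφ1 j⟩)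
    (fun j ↦ (hJstar j).le) (fun x ↦ (hfix x).ge) sub_le_eps i
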